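/- arXiv:0806.3422 — 2 statements merged into one kernel-verified Lean document; each statement's English description precedes it below -/
import Mathlib

section
/- Let u : ℤ → ℝ be a grid function such that the sequence of differences j ↦ u(j+1) − u(j) is summable, and let C⁺, C⁻ : ℤ → ℝ satisfy C⁺(j) ≥ 0, C⁻(j) ≥ 0 and C⁺(j) + C⁻(j) ≤ 1 for every j ∈ ℤ. Define the updated grid function w : ℤ → ℝ by w(j) = u(j) + C⁺(j)·(u(j+1) − u(j)) − C⁻(j−1)·(u(j) − u(j−1)). Then the sequence j ↦ w(j+1) − w(j) is summable and the total variation does not increase: ∑_{j∈ℤ} |w(j+1) − w(j)| ≤ ∑_{j∈ℤ} |u(j+1) − u(j)|. -/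
/-- Harten's lemma: a scheme in incremental form with nonnegative coefficients
whose sum is at most 1 is total-variation diminishing. -/
theorem harten_tvd (u w Cp Cm : ℤ → ℝ)
    (hu : Summable (fun j : ℤ => |u (j + 1) - u j|))
    (hCp : ∀ j : ℤ, 0 ≤ Cp j) (hCm : ∀ j : ℤ, 0 ≤ Cm j)
    (hsum : ∀ j : ℤ, Cp j + Cm j ≤ 1)
    (hw : ∀ j : ℤ, w j = u j + Cp j * (u (j + 1) - u j) - Cm (j - 1) * (u j - u (j - 1))) :
    Summable (fun j : ℤ => |w (j + 1) - w j|) ∧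
      (∑' j : ℤ, |w (j + 1) - w j|) ≤ ∑' j : ℤ, |u (j + 1) - u j| := by
  have hP : Summable (fun j : ℤ => Cp j * |u (j + 1) - u j|) := by
    refine Summable.of_nonneg_of_le (fun j => mul_nonneg (hCp j) (abs_nonneg _)) (fun j => ?_) hu
    exact mul_le_of_le_one_left (abs_nonneg _) (by linarith [hCm j, hsum j])
  have hM : Summable (fun j : ℤ => Cm j * |u (j + 1) - u j|) := by
    refine Summable.of_nonneg_of_le (fun j => mul_nonneg (hCm j) (abs_nonneg _)) (fun j => ?_) hu
    exact mul_le_of_le_one_left (abs_nonneg _) (by linarith [hCp j, hsum j])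
  have hP1 := (Equiv.hasSum_iff (Equiv.addRight (1 : ℤ))).2 hP.hasSum
  have hM1 := (Equiv.hasSum_iff (Equiv.subRight (1 : ℤ))).2 hM.hasSum
  have hB := (((hu.hasSum.sub hP.hasSum).sub hM.hasSum).add hP1).add hM1
  have hle : ∀ j : ℤ, |w (j + 1) - w j| ≤ |u (j + 1) - u j| - Cp j * |u (j + 1) - u j|
      - Cm j * |u (j + 1) - u j| + Cp (j + 1) * |u (j + 1 + 1) - u (j + 1)|
      + Cm (j - 1) * |u (j - 1 + 1) - u (j - 1)| := by
    intro j
    have e : w (j + 1) - w j = (1 - Cp j - Cm j) * (u (j + 1) - u j)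
        + Cp (j + 1) * (u (j + 1 + 1) - u (j + 1))
        + Cm (j - 1) * (u (j - 1 + 1) - u (j - 1)) := by
      rw [hw, hw, add_sub_cancel_right, sub_add_cancel]
      ring
    have h0 : 0 ≤ 1 - Cp j - Cm j := by linarith [hsum j]
    rw [e]
    refine (abs_add_three _ _ _).trans (le_of_eq ?_)
    rw [abs_mul, abs_mul, abs_mul, abs_of_nonneg h0, abs_of_nonneg (hCp _),
      abs_of_nonneg (hCm _)]
    ring
  have hS : Summable (fun j : ℤ => |w (j + 1) - w j|) :=
    Summable.of_nonneg_of_le (fun j => abs_nonneg _) hle hB.summable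
  refine ⟨hS, ?_⟩
  have := hasSum_le hle hS.hasSum hB
  linarith
end

section
/- Let s ≥ 1, h > 0, a ∈ ℝ, and consider the 2s equispaced nodes x_i = a + i·h for i ∈ {−s, …, s−1} with arbitrary values u_{−s}, …, u_{s−1} ∈ ℝ. Let q be the unique polynomial of degree at most 2s − 1 with q(x_i) = u_i for each i. Then the value of q at the midpoint m = a − h/2 of [x_{−1}, x₀] is q(m) = ∑_{l=1}^{s} β_l (u_{l−1} + u_{−l}), where β_l = (−1)^{l+1} · (2l−1) · (∏_{m=1, m≠l}^{s} (2m−1)²) / (2^{2s−1} · (s+l−1)! · (s−l)!). -/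
open Finset in
lemma cmi_prod_erase (k d : ℕ) :
    ∏ j ∈ (range (k + 1 + d)).erase k, ((k : ℝ) - j) =
      (k.factorial : ℝ) * ((-1) ^ d * (d.factorial : ℝ)) := by
  induction d with
  | zero =>
    have e : (range (k + 1 + 0)).erase k = range k := by
      ext x; simp only [mem_erase, mem_range]; omega
    rw [e, ← prod_range_reflect, ← Finset.prod_range_add_one_eq_factorial]
    push_cast
    simp only [pow_zero, Nat.factorial_zero, Nat.cast_one, mul_one]
    apply prod_congr rfl
    intro j hj
    rw [mem_range] at hj
    have : k - 1 - j + j + 1 = k := by omega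
    have h2 : ((k - 1 - j : ℕ) : ℝ) + j + 1 = k := by exact_mod_cast this
    linarith
  | succ d ih =>
    have e : (range (k + 1 + (d + 1))).erase k = insert (k + 1 + d) ((range (k + 1 + d)).erase k) := by
      ext x; simp only [mem_erase, mem_range, mem_insert]; omega
    rw [e, prod_insert (by simp), ih, Nat.factorial_succ]
    push_cast
    ring

open Finset in
lemma cmi_prod_full (s : ℕ) :
    ∏ j ∈ range (s + s), ((s : ℝ) - 1 / 2 - j) =
      (-1) ^ s * ∏ j ∈ range s, ((j : ℝ) + 1 / 2) ^ 2 := by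
  rw [prod_range_add, ← prod_range_reflect, ← prod_mul_distrib]
  have : ((-1 : ℝ)) ^ s = ∏ j ∈ range s, (-1 : ℝ) := by simp
  rw [this, ← prod_mul_distrib]
  apply prod_congr rfl
  intro j hj
  rw [mem_range] at hj
  have : s - 1 - j + j + 1 = s := by omega
  have h2 : ((s - 1 - j : ℕ) : ℝ) + j + 1 = s := by exact_mod_cast this
  have h3 : ((s - 1 - j : ℕ) : ℝ) = s - j - 1 := by linarith
  rw [h3]
  push_cast
  ring

open Finset in
lemma cmi_basis (s k d : ℕ) (hk : k + 1 + d = s + s) (h a : ℝ) (hh : 0 < h)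
    (v : ℕ → ℝ) (hv : ∀ j, v j = a + ((j : ℝ) - s) * h) :
    (Lagrange.basis (range (s + s)) v k).eval (a - h / 2) * ((s : ℝ) - 1 / 2 - k) *
      ((k.factorial : ℝ) * ((-1) ^ d * (d.factorial : ℝ))) =
      (-1) ^ s * ∏ j ∈ range s, ((j : ℝ) + 1 / 2) ^ 2 := by
  rw [← cmi_prod_full, ← cmi_prod_erase, hk,
    ← prod_erase_mul (range (s + s)) _ (show k ∈ range (s + s) by rw [mem_range]; omega)]
  rw [Lagrange.basis, Polynomial.eval_prod, mul_right_comm, ← prod_mul_distrib]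
  congr 1
  apply prod_congr rfl
  intro j hj
  have hne : (k : ℝ) - j ≠ 0 := by
    rw [sub_ne_zero]; exact_mod_cast (ne_of_mem_erase hj).symm
  have hvv : v k - v j = h * (k - j) := by rw [hv, hv]; ring
  simp only [Lagrange.basisDivisor, Polynomial.eval_mul, Polynomial.eval_C, Polynomial.eval_sub,
    Polynomial.eval_X]
  rw [hvv, hv]
  have := hh.ne'
  field_simp
  ring

open Finset in
lemma cmi_beta (s l : ℕ) (hl : l < s) (B e K : ℝ)
    (hB : B * e * K = (-1) ^ s * ∏ j ∈ range s, ((j : ℝ) + 1 / 2) ^ 2)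
    (he : e * K = (-1) ^ s * (-1) ^ l * ((l : ℝ) + 1 / 2) *
      (((s + l).factorial : ℝ) * ((s - 1 - l).factorial : ℝ))) :
    B = (-1 : ℝ) ^ (l + 1 + 1) * (2 * ((l + 1 : ℕ) : ℝ) - 1) *
            (∏ m ∈ (Icc 1 s).erase (l + 1), (2 * (m : ℝ) - 1) ^ 2) /
          (2 ^ (2 * s - 1) * (Nat.factorial (s + (l + 1) - 1) : ℝ) *
            (Nat.factorial (s - (l + 1)) : ℝ)) := by
  have hP : (∏ m ∈ (Icc 1 s).erase (l + 1), (2 * (m : ℝ) - 1) ^ 2) * (2 * ((l + 1 : ℕ) : ℝ) - 1) ^ 2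
      = 2 ^ (2 * s) * ∏ j ∈ range s, ((j : ℝ) + 1 / 2) ^ 2 := by
    rw [prod_erase_mul (Icc 1 s) (fun m : ℕ => (2 * (m : ℝ) - 1) ^ 2) (by rw [mem_Icc]; omega)]
    have : ((2 : ℝ)) ^ (2 * s) = ∏ j ∈ range s, (4 : ℝ) := by
      rw [pow_mul]; norm_num
    have e2 : Icc 1 s = Ico (0 + 1) (s + 1) := by ext x; simp only [mem_Icc, mem_Ico]; omega
    rw [this, ← prod_mul_distrib, range_eq_Ico, e2,
      ← prod_Ico_add' (fun m : ℕ => (2 * (m : ℝ) - 1) ^ 2) 0 s 1]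
    apply prod_congr rfl
    intro j _
    push_cast
    ring
  have e1 : s + (l + 1) - 1 = s + l := by omega
  have e2 : s - (l + 1) = s - 1 - l := by omega
  have e3 : (2 : ℝ) ^ (2 * s) = 2 ^ (2 * s - 1) * 2 := by
    rw [← pow_succ]; congr 1; omega
  rw [e1, e2]
  have f1 : ((s + l).factorial : ℝ) ≠ 0 := by positivity
  have f2 : ((s - 1 - l).factorial : ℝ) ≠ 0 := by positivity
  have f3 : (2 : ℝ) ^ (2 * s - 1) ≠ 0 := by positivity
  have f4 : (l : ℝ) + 1 / 2 ≠ 0 := by positivity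
  rw [mul_assoc, he] at hB
  rw [e3] at hP
  push_cast at hP ⊢
  have hs1 : ((-1 : ℝ)) ^ s * (-1) ^ s = 1 := by rw [← mul_pow]; simp
  have hl1 : ((-1 : ℝ)) ^ l * (-1) ^ l = 1 := by rw [← mul_pow]; simp
  rw [pow_succ, pow_succ]
  generalize (s + l).factorial = F at *
  generalize (s - 1 - l).factorial = G at *
  generalize ∏ m ∈ (Icc 1 s).erase (l + 1), (2 * (m : ℝ) - 1) ^ 2 = P at *
  generalize ∏ j ∈ range s, ((j : ℝ) + 1 / 2) ^ 2 = Q at *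
  generalize (2 : ℝ) ^ (2 * s - 1) = T at *
  generalize (-1 : ℝ) ^ s = σ at *
  generalize (-1 : ℝ) ^ l = τ at *
  rw [eq_div_iff (by positivity)]
  have hQ : B * τ * ((l : ℝ) + 1 / 2) * (F * G) = Q := by
    linear_combination σ * hB + (Q - B * τ * ((l : ℝ) + 1 / 2) * (F * G)) * hs1
  apply mul_left_cancel₀ f4
  linear_combination (T * τ) * hQ - τ / 2 * hP - ((l : ℝ) + 1 / 2) * B * T * F * G * hl1

/-- Central interpolation of degree `2s − 1` at the midpoint of the two middle nodes of a
symmetric equispaced stencil of `2s` points: the value is `∑ₗ βₗ (u_{l−1} + u_{−l})` with the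
explicit coefficients
`βₗ = (−1)^{l+1} (2l−1) ∏_{m≠l} (2m−1)² / (2^{2s−1} (s+l−1)! (s−l)!)`. -/
theorem central_midpoint_interpolation (s : ℕ) (hs : 1 ≤ s) (h a : ℝ) (hh : 0 < h)
    (u : ℤ → ℝ) (q : Polynomial ℝ) (hdeg : q.degree ≤ (2 * s - 1 : ℕ))
    (hq : ∀ i : ℤ, -(s : ℤ) ≤ i → i ≤ (s : ℤ) - 1 → q.eval (a + (i : ℝ) * h) = u i) :
    q.eval (a - h / 2) =
      ∑ l ∈ Finset.Icc 1 s,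
        ((-1 : ℝ) ^ (l + 1) * (2 * (l : ℝ) - 1) *
            (∏ m ∈ (Finset.Icc 1 s).erase l, (2 * (m : ℝ) - 1) ^ 2) /
          (2 ^ (2 * s - 1) * (Nat.factorial (s + l - 1) : ℝ) * (Nat.factorial (s - l) : ℝ))) *
        (u ((l : ℤ) - 1) + u (-(l : ℤ))) := by

  classical
  set v : ℕ → ℝ := fun j => a + ((j : ℝ) - s) * h with hv
  have hv' : ∀ j, v j = a + ((j : ℝ) - s) * h := fun j => rfl
  have hinj : Set.InjOn v (Finset.range (s + s)) := by
    intro i _ j _ hij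
    rw [hv', hv'] at hij
    have := mul_right_cancel₀ hh.ne' (add_left_cancel hij)
    have h3 : (i : ℝ) = j := by linarith
    exact_mod_cast h3
  have hd : q.degree < (Finset.range (s + s)).card := by
    refine lt_of_le_of_lt hdeg ?_
    rw [Finset.card_range]
    exact_mod_cast (by omega : 2 * s - 1 < s + s)
  have hI := Lagrange.eq_interpolate_of_eval_eq (fun j : ℕ => u ((j : ℤ) - s)) hinj hd (by
    intro j hj
    rw [Finset.mem_range] at hj
    rw [← hq _ (by omega) (by omega), hv']
    push_cast
    rfl)
  have hval : q.eval (a - h / 2) = ∑ j ∈ Finset.range (s + s),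
      u ((j : ℤ) - s) * (Lagrange.basis (Finset.range (s + s)) v j).eval (a - h / 2) := by
    rw [hI, Lagrange.interpolate_apply, Polynomial.eval_finsetSum]
    simp
  have e2 : Finset.Icc 1 s = Finset.Ico (0 + 1) (s + 1) := by
    ext x; simp only [Finset.mem_Icc, Finset.mem_Ico]; omega
  have e4 : ∀ f : ℕ → ℝ, ∑ l ∈ Finset.Icc 1 s, f l = ∑ l ∈ Finset.range s, f (l + 1) := by
    intro f
    rw [e2, Finset.range_eq_Ico, ← Finset.sum_Ico_add' f 0 s 1]
  rw [hval, e4, Finset.sum_range_add, ← Finset.sum_range_reflect, ← Finset.sum_add_distrib]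
  apply Finset.sum_congr rfl
  intro l hl
  rw [Finset.mem_range] at hl
  have hc : ((s - 1 - l : ℕ) : ℝ) = s - 1 - l := by
    have : s - 1 - l + l + 1 = s := by omega
    have h2 : ((s - 1 - l : ℕ) : ℝ) + l + 1 = s := by exact_mod_cast this
    linarith
  have hpow : (-1 : ℝ) ^ (s - 1 - l) = - ((-1) ^ s * (-1) ^ l) := by
    obtain ⟨t, rfl⟩ : ∃ t, s = t + l + 1 := ⟨s - 1 - l, by omega⟩
    have : t + l + 1 - 1 - l = t := by omega
    rw [this]
    have hl1 : ((-1 : ℝ)) ^ l * (-1) ^ l = 1 := by rw [← mul_pow]; simp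
    rw [pow_succ, pow_add]
    linear_combination -(-1 : ℝ) ^ t * hl1
  have b1 := cmi_beta s l hl _ _ _
    (cmi_basis s (s - 1 - l) (s + l) (by omega) h a hh v hv') (by rw [hc, pow_add]; ring)
  have b2 := cmi_beta s l hl _ _ _
    (cmi_basis s (s + l) (s - 1 - l) (by omega) h a hh v hv') (by rw [hpow]; push_cast; ring)
  rw [b1, b2]
  have i1 : ((s - 1 - l : ℕ) : ℤ) - s = -((l + 1 : ℕ) : ℤ) := by omega
  have i2 : ((s + l : ℕ) : ℤ) - s = ((l + 1 : ℕ) : ℤ) - 1 := by omega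
  rw [i1, i2]
  ring
end
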